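/- arXiv:1412.3438 — 3 statements merged into one kernel-verified Lean document; each statement's English description precedes it below -/
import Mathlib

section
/- Let N ≥ 1, let 1 < p < ∞, let C₁, C₂ > 0 and C₁⁰, C₂⁰ ∈ ℝ, and let j : ℝ^N → ℝ be a convex function satisfying C₁|r|^p + C₁⁰ ≤ j(r) ≤ C₂|r|^p + C₂⁰ for all r ∈ ℝ^N. Then there exist constants C₃ > 0 and C₃⁰ ≥ 0, depending only on p, C₁, C₂, C₁⁰, C₂⁰ (and not on j or r), such that for every r ∈ ℝ^N and every ξ ∈ ∂j(r) one has |ξ| ≤ C₃ |r|^{p−1} + C₃⁰. -/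
open scoped RealInnerProductSpace

/-!
Testing the subgradient inequality on a ball of radius `R` around `r` gives
`R * ‖ξ‖ ≤ sup j - j r`, the supremum being over the ball. For `R = max ‖r‖ 1` the right-hand
side is of order `R ^ p`, because the ball lies in the ball of radius `2 * R` around the origin;
dividing by `R` leaves the power `p - 1`, and `R ≥ 1` keeps the contribution of the additive
constants bounded.
-/

section Subgradient

variable {E : Type*} [NormedAddCommGroup E] [NormedSpace ℝ E]

/-- `ξ` belongs to the subdifferential of `j` at `r`. Subgradients are continuous linear
functionals, so that the notion makes sense in any normed space; in `ℝ^N` the vector `ξ` stands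
for `innerSL ℝ ξ`. -/
def IsSubgradientAt (j : E → ℝ) (ξ : StrongDual ℝ E) (r : E) : Prop :=
  ∀ s, j r + ξ (s - r) ≤ j s

theorem IsSubgradientAt.norm_le_div {j : E → ℝ} {ξ : StrongDual ℝ E} {r : E}
    (hξ : IsSubgradientAt j ξ r) {R M : ℝ} (hR : 0 < R)
    (hM : ∀ s ∈ Metric.closedBall r R, j s ≤ M) : ‖ξ‖ ≤ (M - j r) / R := by
  have apply_le : ∀ h : E, ‖h‖ ≤ R → ξ h ≤ M - j r := fun h hh ↦ by
    have hsub := hξ (r + h)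
    have hle := hM (r + h) (by simpa using hh)
    rw [add_sub_cancel_left] at hsub
    linarith
  refine ContinuousLinearMap.opNorm_bound_of_ball_bound hR _ ξ fun h hh ↦ ?_
  rw [mem_closedBall_zero_iff] at hh
  have hneg := apply_le (-h) (by rwa [norm_neg])
  rw [map_neg] at hneg
  exact abs_le'.2 ⟨apply_le h hh, hneg⟩

theorem max_one_rpow_le_rpow_add_one {x : ℝ} (hx : 0 ≤ x) (q : ℝ) :
    max x 1 ^ q ≤ x ^ q + 1 := by
  rcases max_choice x 1 with h | h
  · rw [h]
    exact le_add_of_nonneg_right zero_le_one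
  · rw [h, Real.one_rpow]
    exact le_add_of_nonneg_left (Real.rpow_nonneg hx q)

theorem subgradient_growth_bound_general {p C1 C2 C10 C20 : ℝ} (hp : 0 ≤ p) (hC2 : 0 ≤ C2)
    {j : E → ℝ} {ξ : StrongDual ℝ E} {r : E} (hlower : C1 * ‖r‖ ^ p + C10 ≤ j r)
    (hupper : ∀ s, j s ≤ C2 * ‖s‖ ^ p + C20) (hξ : IsSubgradientAt j ξ r) :
    ‖ξ‖ ≤ (C2 * 2 ^ p + |C1|) * ‖r‖ ^ (p - 1) + (C2 * 2 ^ p + |C1| + |C20 - C10|) := by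
  set R := max ‖r‖ 1
  have hrR : ‖r‖ ≤ R := le_max_left _ _
  have hR1 : 1 ≤ R := le_max_right _ _
  have hR : 0 < R := zero_lt_one.trans_le hR1
  have upper_on_ball : ∀ s ∈ Metric.closedBall r R, j s ≤ C2 * (2 * R) ^ p + C20 := fun s hs ↦ by
    have hs2R : ‖s‖ ≤ 2 * R := by
      linarith [norm_le_norm_add_norm_sub' s r, mem_closedBall_iff_norm.1 hs]
    exact (hupper s).trans (by gcongr)
  have lower_at_center : C10 - |C1| * R ^ p ≤ j r := by
    have hC1 : -|C1| * ‖r‖ ^ p ≤ C1 * ‖r‖ ^ p := by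
      gcongr
      exact neg_abs_le C1
    have hpow : |C1| * ‖r‖ ^ p ≤ |C1| * R ^ p := by gcongr
    linarith
  calc ‖ξ‖ ≤ (C2 * (2 * R) ^ p + C20 - j r) / R := hξ.norm_le_div hR upper_on_ball
    _ ≤ (C2 * (2 * R) ^ p + C20 - (C10 - |C1| * R ^ p)) / R := by gcongr
    _ = (C2 * 2 ^ p + |C1|) * R ^ (p - 1) + (C20 - C10) / R := by
      rw [Real.mul_rpow zero_le_two hR.le, Real.rpow_sub_one hR.ne']
      ring
    _ ≤ (C2 * 2 ^ p + |C1|) * (‖r‖ ^ (p - 1) + 1) + |C20 - C10| := by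
      gcongr
      · exact max_one_rpow_le_rpow_add_one (norm_nonneg r) _
      · exact (div_le_div_of_nonneg_right (le_abs_self _) hR.le).trans
          (div_le_self (abs_nonneg _) hR1)
    _ = _ := by ring

end Subgradient

/-- If `j : ℝ^N → ℝ` is convex and satisfies `C₁|r|^p + C₁⁰ ≤ j r ≤ C₂|r|^p + C₂⁰`,
then every subgradient `ξ ∈ ∂j(r)` satisfies `|ξ| ≤ C₃|r|^{p-1} + C₃⁰`, with constants
independent of `j` and `r`. -/
theorem subgradient_growth_bound (N : ℕ) (hN : 1 ≤ N) (p : ℝ) (hp : 1 < p)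
    (C1 C2 C10 C20 : ℝ) (hC1 : 0 < C1) (hC2 : 0 < C2) :
    ∃ C3 C30 : ℝ, 0 < C3 ∧ 0 ≤ C30 ∧
      ∀ j : EuclideanSpace ℝ (Fin N) → ℝ,
        ConvexOn ℝ Set.univ j →
        (∀ r, C1 * ‖r‖ ^ p + C10 ≤ j r ∧ j r ≤ C2 * ‖r‖ ^ p + C20) →
        ∀ r ξ : EuclideanSpace ℝ (Fin N),
          (∀ s, j r + ⟪ξ, s - r⟫ ≤ j s) →
          ‖ξ‖ ≤ C3 * ‖r‖ ^ (p - 1) + C30 := by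
  refine ⟨C2 * 2 ^ p + |C1|, C2 * 2 ^ p + |C1| + |C20 - C10|, by positivity, by positivity,
    fun j _ hj r ξ hξ ↦ ?_⟩
  simpa only [innerSL_apply_norm] using subgradient_growth_bound_general (ξ := innerSL ℝ ξ)
    (zero_le_one.trans hp.le) hC2.le (hj r).1 (fun s ↦ (hj s).2) hξ
end

section
/- Let N ≥ 1, let 1 < p < ∞ with conjugate exponent p′ = p/(p−1), let (Ω, μ) be a measure space with μ(Ω) < ∞, let C₁, C₂ > 0 and C₁⁰, C₂⁰ ∈ ℝ, and let j : Ω × ℝ^N → ℝ be such that for μ-a.e. x ∈ Ω the function j(x, ·) is convex and satisfies C₁|r|^p + C₁⁰ ≤ j(x, r) ≤ C₂|r|^p + C₂⁰ for all r ∈ ℝ^N. Let w : Ω → ℝ^N be measurable with ∫_Ω |w(x)|^p dμ(x) < ∞, and let η : Ω → ℝ^N be measurable with η(x) ∈ ∂j(x, ·)(w(x)) for μ-a.e. x. Then ∫_Ω |η(x)|^{p′} dμ(x) < ∞. -/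
open scoped RealInnerProductSpace
open MeasureTheory

/-!
Test the subgradient inequality at `w + v` with `‖v‖ ≤ r`: since `φ ∈ ∂f(w)` and `f` has
`p`-growth, `‖φ‖ r ≤ A r ^ p + B` for all `r ≥ 0`, where `B` is affine in `‖w‖ ^ p`. Optimising
over `r`, as in the Legendre transform of `r ↦ A r ^ p`, gives `‖φ‖ ^ q ≲ B` for the conjugate
exponent `q`, and the right-hand side is integrable.
-/

theorem norm_add_rpow_le {G : Type*} [SeminormedAddGroup G] {p : ℝ} (hp : 1 ≤ p) (x y : G) :
    ‖x + y‖ ^ p ≤ 2 ^ (p - 1) * (‖x‖ ^ p + ‖y‖ ^ p) :=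
  calc ‖x + y‖ ^ p ≤ (‖x‖ + ‖y‖) ^ p := by gcongr; exact norm_add_le x y
    _ ≤ 2 ^ (p - 1) * (‖x‖ ^ p + ‖y‖ ^ p) := by
      exact_mod_cast NNReal.rpow_add_le_mul_rpow_add_rpow ‖x‖₊ ‖y‖₊ hp

theorem rpow_le_of_forall_mul_le_mul_rpow_add {p q A B y : ℝ} (hpq : p.HolderConjugate q)
    (hA : 0 < A) (hy : 0 ≤ y) (h : ∀ r, 0 ≤ r → y * r ≤ A * r ^ p + B) :
    y ^ q ≤ 2 ^ q * A ^ (q - 1) * B := by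
  obtain ⟨z, hz, rfl⟩ : ∃ z, 0 ≤ z ∧ y = 2 * A * z := ⟨y / (2 * A), by positivity, by field_simp⟩
  -- The choice `r = z ^ (q - 1)` makes both `r ^ p` and `z * r` equal to `z ^ q`.
  have hrp : (z ^ (q - 1)) ^ p = z ^ q := by
    rw [← Real.rpow_mul hz, hpq.symm.sub_one_mul_conj]
  have hmul_rpow : ∀ t : ℝ, 0 ≤ t → t * t ^ (q - 1) = t ^ q := fun t ht => by
    rw [← Real.rpow_one_add' ht (by simpa using hpq.symm.ne_zero), add_sub_cancel]
  have hAz : A * z ^ q ≤ B := by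
    have hr := h (z ^ (q - 1)) (by positivity)
    rw [hrp, mul_assoc, hmul_rpow z hz] at hr
    linarith
  calc (2 * A * z) ^ q = 2 ^ q * A ^ q * z ^ q := by
        rw [Real.mul_rpow (by positivity) hz, Real.mul_rpow zero_le_two hA.le]
    _ = 2 ^ q * A ^ (q - 1) * (A * z ^ q) := by rw [← hmul_rpow A hA.le]; ring
    _ ≤ 2 ^ q * A ^ (q - 1) * B := by gcongr

section Subdifferential

variable {E : Type*} [NormedAddCommGroup E] [NormedSpace ℝ E]

/-- The subdifferential `∂f(x)` of convex analysis. Subgradients are encoded as continuous linear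
functionals; a subgradient `v` with respect to an inner product corresponds to `innerSL ℝ v`. -/
def subdifferential (f : E → ℝ) (x : E) : Set (StrongDual ℝ E) :=
  {φ | ∀ s, f x + φ (s - x) ≤ f s}

theorem opNorm_mul_le_of_forall_apply_le {φ : StrongDual ℝ E} {r M : ℝ} (hr : 0 ≤ r)
    (h : ∀ v, ‖v‖ ≤ r → φ v ≤ M) : ‖φ‖ * r ≤ M := by
  have hM : 0 ≤ M := by simpa using h 0 (by simpa using hr)
  rcases hr.eq_or_lt with rfl | hr
  · simpa using hM
  have habs : ∀ v ∈ Metric.closedBall (0 : E) r, ‖φ v‖ ≤ M := fun v hv => by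
    rw [mem_closedBall_zero_iff] at hv
    have hneg : -φ v ≤ M := by simpa only [map_neg] using h (-v) (by rwa [norm_neg])
    exact abs_le'.2 ⟨h v hv, hneg⟩
  rw [← le_div_iff₀ hr]
  exact φ.opNorm_le_bound (by positivity) (LinearMap.bound_of_ball_bound' hr M φ.toLinearMap habs)

theorem norm_rpow_le_of_mem_subdifferential {p q C b : ℝ} {f : E → ℝ} {x : E}
    {φ : StrongDual ℝ E} (hpq : p.HolderConjugate q) (hC : 0 < C)
    (hf : ∀ r, f r ≤ C * ‖r‖ ^ p + b) (hφ : φ ∈ subdifferential f x) :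
    ‖φ‖ ^ q ≤ 2 ^ q * (C * 2 ^ (p - 1)) ^ (q - 1) *
      (C * 2 ^ (p - 1) * ‖x‖ ^ p + (b - f x)) := by
  refine rpow_le_of_forall_mul_le_mul_rpow_add hpq (by positivity) (norm_nonneg φ) fun r hr =>
    opNorm_mul_le_of_forall_apply_le hr fun v hv => ?_
  calc φ v ≤ f (x + v) - f x := by
        have hsub := hφ (x + v)
        rw [add_sub_cancel_left] at hsub
        linarith
    _ ≤ C * ‖x + v‖ ^ p + b - f x := by gcongr; exact hf (x + v)
    _ ≤ C * (2 ^ (p - 1) * (‖x‖ ^ p + ‖v‖ ^ p)) + b - f x := by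
        gcongr; exact norm_add_rpow_le hpq.lt.le x v
    _ ≤ C * (2 ^ (p - 1) * (‖x‖ ^ p + r ^ p)) + b - f x := by gcongr; exact hpq.nonneg
    _ = C * 2 ^ (p - 1) * r ^ p + (C * 2 ^ (p - 1) * ‖x‖ ^ p + (b - f x)) := by ring

theorem subgradient_selection_Lp'_general {Ω : Type*} [MeasurableSpace Ω] {μ : Measure Ω}
    {p q C : ℝ} (hpq : p.HolderConjugate q) (hC : 0 < C) {a b : Ω → ℝ} (ha : Integrable a μ)
    (hb : Integrable b μ) {j : Ω → E → ℝ} {w : Ω → E} {η : Ω → StrongDual ℝ E}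
    (hlower : ∀ᵐ x ∂μ, a x ≤ j x (w x)) (hupper : ∀ᵐ x ∂μ, ∀ r, j x r ≤ C * ‖r‖ ^ p + b x)
    (hw : Integrable (fun x => ‖w x‖ ^ p) μ) (hη : AEStronglyMeasurable η μ)
    (hsub : ∀ᵐ x ∂μ, η x ∈ subdifferential (j x) (w x)) :
    Integrable (fun x => ‖η x‖ ^ q) μ := by
  set A : ℝ := C * 2 ^ (p - 1)
  have hbound : Integrable
      (fun x => 2 ^ q * A ^ (q - 1) * (A * ‖w x‖ ^ p + (b x - a x))) μ :=
    ((hw.const_mul A).add (hb.sub ha)).const_mul _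
  refine hbound.mono' (hη.norm.aemeasurable.pow_const q).aestronglyMeasurable ?_
  filter_upwards [hlower, hupper, hsub] with x hax hbx hηx
  rw [Real.norm_of_nonneg (by positivity)]
  calc ‖η x‖ ^ q ≤ 2 ^ q * A ^ (q - 1) * (A * ‖w x‖ ^ p + (b x - j x (w x))) :=
        norm_rpow_le_of_mem_subdifferential hpq hC hbx hηx
    _ ≤ 2 ^ q * A ^ (q - 1) * (A * ‖w x‖ ^ p + (b x - a x)) := by gcongr

end Subdifferential

/-- If `j(x,·)` is convex with `C₁|r|^p + C₁⁰ ≤ j(x,r) ≤ C₂|r|^p + C₂⁰` a.e. on a finite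
measure space, `w` is measurable with `∫ |w|^p < ∞`, and `η(x) ∈ ∂j(x,·)(w(x))` a.e.,
then `∫ |η|^{p'} < ∞` where `p' = p/(p-1)`. -/
theorem subgradient_selection_Lp' (N : ℕ) (hN : 1 ≤ N) (p : ℝ) (hp : 1 < p)
    {Ω : Type*} [MeasurableSpace Ω] (μ : Measure Ω) [IsFiniteMeasure μ]
    (C1 C2 C10 C20 : ℝ) (hC1 : 0 < C1) (hC2 : 0 < C2)
    (j : Ω → EuclideanSpace ℝ (Fin N) → ℝ)
    (hj : ∀ᵐ x ∂μ, ConvexOn ℝ Set.univ (j x) ∧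
      ∀ r, C1 * ‖r‖ ^ p + C10 ≤ j x r ∧ j x r ≤ C2 * ‖r‖ ^ p + C20)
    (w η : Ω → EuclideanSpace ℝ (Fin N))
    (hw : Measurable w) (hwint : Integrable (fun x => ‖w x‖ ^ p) μ)
    (hη : Measurable η)
    (hsub : ∀ᵐ x ∂μ, ∀ s, j x (w x) + ⟪η x, s - w x⟫ ≤ j x s) :
    Integrable (fun x => ‖η x‖ ^ (p / (p - 1))) μ := by
  have hlower : ∀ᵐ x ∂μ, C1 * ‖w x‖ ^ p + C10 ≤ j x (w x) := hj.mono fun x hx => (hx.2 (w x)).1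
  have hupper : ∀ᵐ x ∂μ, ∀ r, j x r ≤ C2 * ‖r‖ ^ p + C20 := hj.mono fun x hx r => (hx.2 r).2
  have hηdual : AEStronglyMeasurable (fun x => innerSL ℝ (η x)) μ :=
    (innerSL ℝ).continuous.comp_aestronglyMeasurable hη.aestronglyMeasurable
  simpa only [innerSL_apply_norm] using
    subgradient_selection_Lp'_general ((Real.holderConjugate_iff_eq_conjExponent hp).2 rfl) hC2
      ((hwint.const_mul C1).add (integrable_const C10)) (integrable_const C20)
      hlower hupper hwint hηdual hsub
end

section
/- (Lemma 4.1) Let N ≥ 1, let (Ω, μ) be a measure space with μ(Ω) < ∞, and let j : Ω × ℝ^N → ℝ be such that for μ-a.e. x the function j(x, ·) is convex and nonnegative, and denote by j*(x, ω) = sup_{s ∈ ℝ^N} (⟨ω, s⟩ − j(x, s)) ∈ ℝ ∪ {+∞} its pointwise Fenchel conjugate. Let u, w : Ω → ℝ^N be Bochner integrable functions such that x ↦ j(x, u(x)) is integrable on Ω, j*(x, w(x)) < ∞ for μ-a.e. x, and x ↦ j*(x, w(x)) is integrable on Ω. Assume the symmetry condition: there exist constants γ₁ > 0 and γ₂ ≥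 0 such that j(x, r) ≤ γ₁ j(x, −r) + γ₂ for μ-a.e. x and all r ∈ ℝ^N. Then the function x ↦ ⟨u(x), w(x)⟩ is integrable on Ω. -/
open scoped RealInnerProductSpace
open MeasureTheory

/-!
The Fenchel–Young inequality at `u x` bounds `⟪w x, u x⟫` from above by `j(x, u x) + j*(x, w x)`.
At `-u x` it bounds `⟪w x, u x⟫` from below by `-(j(x, -u x) + j*(x, w x))`, where the symmetry
condition replaces `j(x, -u x)` by `γ₁ j(x, u x) + γ₂`. Both bounds are integrable.
-/

section FenchelConjugate

variable {E : Type*} [NormedAddCommGroup E] [InnerProductSpace ℝ E]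

/-- The effective domain `{ω | g*(ω) < ∞}` of the Fenchel conjugate of `g`, where finiteness of the
supremum is encoded as boundedness of the family `⟪ω, s⟫ - g s`. -/
def fenchelDomain (g : E → ℝ) : Set E :=
  {ω | BddAbove (Set.range fun s => ⟪ω, s⟫ - g s)}

/-- The Fenchel conjugate `g*(ω) = sup_s (⟪ω, s⟫ - g s)`, with real values: it is meaningful on
`fenchelDomain g` only, and takes the junk value `0` where the supremum is infinite. -/
noncomputable def fenchelConj (g : E → ℝ) (ω : E) : ℝ :=
  ⨆ s, (⟪ω, s⟫ - g s)

theorem inner_le_add_fenchelConj {g : E → ℝ} {ω : E} (hω : ω ∈ fenchelDomain g) (s : E) :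
    ⟪ω, s⟫ ≤ g s + fenchelConj g ω :=
  sub_le_iff_le_add'.mp (le_ciSup hω s)

theorem neg_add_fenchelConj_le_inner {g : E → ℝ} {ω : E} (hω : ω ∈ fenchelDomain g) (s : E) :
    -(g (-s) + fenchelConj g ω) ≤ ⟪ω, s⟫ := by
  rw [neg_le, ← inner_neg_right]
  exact inner_le_add_fenchelConj hω (-s)

-- The majorant `b` is there because `x ↦ j x (-u x)` need not be measurable.
theorem inner_integrable_of_fenchel_general {Ω : Type*} [MeasurableSpace Ω] {μ : Measure Ω}
    {j : Ω → E → ℝ} {u w : Ω → E} {b : Ω → ℝ}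
    (hu : AEStronglyMeasurable u μ) (hw : AEStronglyMeasurable w μ)
    (hju : Integrable (fun x => j x (u x)) μ)
    (hb : Integrable b μ) (hjb : ∀ᵐ x ∂μ, j x (-u x) ≤ b x)
    (hfin : ∀ᵐ x ∂μ, w x ∈ fenchelDomain (j x))
    (hjw : Integrable (fun x => fenchelConj (j x) (w x)) μ) :
    Integrable (fun x => ⟪u x, w x⟫) μ := by
  simp only [fun x => real_inner_comm (w x) (u x)]
  refine integrable_of_le_of_le (hw.inner hu) ?lower ?upper (hb.add hjw).neg (hju.add hjw)
  case lower =>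
    filter_upwards [hfin, hjb] with x hx hjbx
    calc -(b x + fenchelConj (j x) (w x))
        ≤ -(j x (-u x) + fenchelConj (j x) (w x)) := by gcongr
      _ ≤ ⟪w x, u x⟫ := neg_add_fenchelConj_le_inner hx (u x)
  case upper =>
    exact hfin.mono fun x hx => inner_le_add_fenchelConj hx (u x)

end FenchelConjugate

/-- (Lemma 4.1) If `j(x,·)` is a.e. convex and nonnegative, `u, w` are Bochner integrable,
`j(·,u(·))` is integrable, `j*(·,w(·))` is a.e. finite and integrable, and `j` satisfies the
symmetry condition `j(x,r) ≤ γ₁ j(x,-r) + γ₂`, then `x ↦ ⟨u(x), w(x)⟩` is integrable. -/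
theorem inner_integrable_of_fenchel (N : ℕ) (hN : 1 ≤ N)
    {Ω : Type*} [MeasurableSpace Ω] (μ : Measure Ω) [IsFiniteMeasure μ]
    (j : Ω → EuclideanSpace ℝ (Fin N) → ℝ)
    (hj : ∀ᵐ x ∂μ, ConvexOn ℝ Set.univ (j x) ∧ ∀ r, 0 ≤ j x r)
    (u w : Ω → EuclideanSpace ℝ (Fin N))
    (hu : Integrable u μ) (hw : Integrable w μ)
    (hju : Integrable (fun x => j x (u x)) μ)
    (hfin : ∀ᵐ x ∂μ, BddAbove
      (Set.range fun s : EuclideanSpace ℝ (Fin N) => ⟪w x, s⟫ - j x s))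
    (hjw : Integrable
      (fun x => ⨆ s : EuclideanSpace ℝ (Fin N), (⟪w x, s⟫ - j x s)) μ)
    (γ1 γ2 : ℝ) (hγ1 : 0 < γ1) (hγ2 : 0 ≤ γ2)
    (hsym : ∀ᵐ x ∂μ, ∀ r, j x r ≤ γ1 * j x (-r) + γ2) :
    Integrable (fun x => ⟪u x, w x⟫) μ := by
  have hneg : ∀ᵐ x ∂μ, j x (-u x) ≤ γ1 * j x (u x) + γ2 :=
    hsym.mono fun x hx => by simpa only [neg_neg] using hx (-u x)
  exact inner_integrable_of_fenchel_general hu.aestronglyMeasurable hw.aestronglyMeasurable hju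
    ((hju.const_mul γ1).add (integrable_const γ2)) hneg hfin hjw
end
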